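/- There exists an absolute constant c > 0 with the following property. Let X and Y be real-valued random variables with characteristic functions φ_X and φ_Y, and let Z be a real-valued random variable whose law is absolutely continuous with respect to Lebesgue measure with a bounded density f_Z. Then for every T > 0, d_K(X,Z) ≤ (4c+1)·d_K(Y,Z) + ∫_{−T}^{T} | (φ_X(t) − φ_Y(t)) / t | dt + 2‖f_Z‖_∞ c² / T, where d_K(U,V) = sup_{t∈ℝ} |P(U ≤ t) − P(V ≤ t)| is the Kolmogorov distance and ‖f_Z‖_∞ = sup f_Z. -/

import Mathlib

open MeasureTheory Filter Topology Complex
open scoped ENNReal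

/-- The characteristic function of a law `μ` on `ℝ`: `φ_μ(t) = ∫ e^{itx} dμ(x)`. -/
noncomputable def charFn (μ : Measure ℝ) (t : ℝ) : ℂ :=
  ∫ x, Complex.exp ((t * x : ℝ) * Complex.I) ∂μ

/-- The Kolmogorov (uniform) distance between two laws on `ℝ`:
`d_K(μ,ν) = sup_t |μ(-∞,t] − ν(-∞,t]|`. -/
noncomputable def kolDist (μ ν : Measure ℝ) : ℝ :=
  ⨆ t : ℝ, |(μ (Set.Iic t)).toReal - (ν (Set.Iic t)).toReal|


noncomputable def kk (w : ℝ) : ℝ := ∫ t in (0:ℝ)..1, (1 - t) * Real.cos (t * w)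

lemma kk_cont : Continuous kk := by
  unfold kk
  apply intervalIntegral.continuous_parametric_intervalIntegral_of_continuous'
  unfold Function.uncurry
  fun_prop

lemma kk_eq (w : ℝ) (hw : w ≠ 0) : kk w = (1 - Real.cos w) / w ^ 2 := by
  unfold kk
  have h : ∀ t ∈ Set.uIcc (0:ℝ) 1, HasDerivAt
      (fun t : ℝ => (1 - t) * (Real.sin (t * w) / w) - Real.cos (t * w) / w ^ 2)
      ((1 - t) * Real.cos (t * w)) t := by
    intro t _
    have h1 : HasDerivAt (fun t : ℝ => t * w) w t := by
      simpa using (hasDerivAt_id t).mul_const w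
    have h2 := ((hasDerivAt_id t).const_sub 1).mul (h1.sin.div_const w)
    have h3 := h1.cos.div_const (w ^ 2)
    have h4 := h2.sub h3
    have h5 : (1 - t) * Real.cos (t * w) = -1 * (Real.sin (t * w) / w) +
        (1 - id t) * (Real.cos (t * w) * w / w) - -Real.sin (t * w) * w / w ^ 2 := by
      simp only [id]
      field_simp
      ring
    rw [h5]
    exact h4
  rw [intervalIntegral.integral_eq_sub_of_hasDerivAt h]
  · simp
    field_simp
    ring
  · apply Continuous.intervalIntegrable
    fun_prop

lemma kk_zero : kk 0 = 1 / 2 := by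
  unfold kk
  simp only [mul_zero, Real.cos_zero, mul_one]
  rw [intervalIntegral.integral_sub (by simp) (by simp)]
  simp
  norm_num

lemma kk_nonneg (w : ℝ) : 0 ≤ kk w := by
  by_cases hw : w = 0
  · subst hw; rw [kk_zero]; norm_num
  · rw [kk_eq w hw]
    have := Real.cos_le_one w
    exact div_nonneg (by linarith) (by positivity)

lemma kk_le_one (w : ℝ) : kk w ≤ 1 := by
  have h := intervalIntegral.norm_integral_le_of_norm_le_const (a := 0) (b := 1) (C := 1)
    (f := fun t : ℝ => (1 - t) * Real.cos (t * w)) (by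
      intro t ht
      rw [Set.uIoc_of_le zero_le_one] at ht
      rw [norm_mul, Real.norm_eq_abs, Real.norm_eq_abs]
      have h1 := Real.abs_cos_le_one (t * w)
      have h2 : |1 - t| ≤ 1 := by rw [abs_le]; constructor <;> linarith [ht.1, ht.2]
      nlinarith [abs_nonneg (1 - t), abs_nonneg (Real.cos (t * w))])
  have := le_trans (le_abs_self _) h
  simpa [kk] using this

lemma kk_bound (w : ℝ) : kk w ≤ 4 * (1 + w ^ 2)⁻¹ := by
  rw [← div_eq_mul_inv, le_div_iff₀ (by positivity)]
  rcases le_total (w ^ 2) 1 with h | h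
  · nlinarith [kk_le_one w, kk_nonneg w, sq_nonneg w]
  · have hw : w ≠ 0 := by rintro rfl; norm_num at h
    rw [kk_eq w hw, div_mul_eq_mul_div, div_le_iff₀ (by positivity)]
    nlinarith [Real.neg_one_le_cos w, Real.cos_le_one w]

lemma kk_int : Integrable kk := by
  refine (integrable_inv_one_add_sq.const_mul 4).mono' kk_cont.aestronglyMeasurable ?_
  filter_upwards with w
  rw [Real.norm_eq_abs, abs_of_nonneg (kk_nonneg w)]
  exact kk_bound w

lemma kk_lower (w : ℝ) (hw : |w| ≤ Real.pi) (h0 : w ≠ 0) : 2 / Real.pi ^ 2 ≤ kk w := by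
  rw [kk_eq w h0, le_div_iff₀ (by positivity)]
  linarith [Real.cos_le_one_sub_mul_cos_sq hw]

lemma kk_mass : 1 < ∫ w, kk w := by
  have h1 : ∫ w in Set.Ioc (0:ℝ) Real.pi, (2 / Real.pi ^ 2) ≤ ∫ w in Set.Ioc (0:ℝ) Real.pi, kk w := by
    apply setIntegral_mono_on (by simp) kk_int.integrableOn measurableSet_Ioc
    intro w hw
    exact kk_lower w (by rw [abs_of_pos hw.1]; exact hw.2) hw.1.ne'
  have h2 : ∫ w in Set.Ico (-Real.pi) 0, (2 / Real.pi ^ 2) ≤ ∫ w in Set.Ico (-Real.pi) 0, kk w := by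
    apply setIntegral_mono_on (by simp) kk_int.integrableOn measurableSet_Ico
    intro w hw
    exact kk_lower w (by rw [abs_of_neg hw.2]; linarith [hw.1]) hw.2.ne
  have h3 : ∫ w in Set.Ico (-Real.pi) 0 ∪ Set.Ioc (0:ℝ) Real.pi, kk w ≤ ∫ w, kk w :=
    setIntegral_le_integral kk_int (ae_of_all _ kk_nonneg)
  rw [setIntegral_union (by
    rw [Set.disjoint_left]; intro x hx hx'; linarith [hx.2, hx'.1]) measurableSet_Ioc
    kk_int.integrableOn kk_int.integrableOn] at h3
  simp [Real.pi_pos.le] at h1 h2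
  have h4 : 1 / 2 < Real.pi * (2 / Real.pi ^ 2) := by
    have : Real.pi * (2 / Real.pi ^ 2) = 2 / Real.pi := by field_simp
    rw [this, lt_div_iff₀ Real.pi_pos]
    linarith [Real.pi_lt_four]
  linarith

lemma exists_a : ∃ a : ℝ, 0 < a ∧ 1 ≤ 2 * (∫ w in Set.Icc (-a) a, kk w) - ∫ w, kk w := by
  have h := intervalIntegral_tendsto_integral (f := kk) (μ := volume) kk_int
    (a := fun a : ℝ => -a) (b := fun a : ℝ => a) (l := atTop) tendsto_neg_atTop_atBot tendsto_id
  have h2 : (1 + ∫ w, kk w) / 2 < ∫ w, kk w := by linarith [kk_mass]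
  obtain ⟨a, ha, ha0⟩ := ((h.eventually (lt_mem_nhds h2)).and (eventually_gt_atTop 0)).exists
  refine ⟨a, ha0, ?_⟩
  rw [integral_Icc_eq_integral_Ioc, ← intervalIntegral.integral_of_le (by linarith)]
  linarith

/-- desmoothing -/
lemma desmooth (g : ℝ → ℝ) (hg : Measurable g) (D B T a x0 R : ℝ) (hT : 0 < T) (ha : 0 < a)
    (hB : 0 ≤ B)
    (hD : ∀ x, |g x| ≤ D) (hL : ∀ y s, 0 ≤ s → g y - B * s ≤ g (y + s))
    (hR : ∀ x, |∫ w, g (x - w / T) * kk w| ≤ R) :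
    g x0 * (∫ w in Set.Icc (-a) a, kk w) ≤ R + 2 * a * B / T * (∫ w in Set.Icc (-a) a, kk w)
      + D * ((∫ w, kk w) - ∫ w in Set.Icc (-a) a, kk w) := by
  have h1 := le_trans (le_abs_self _) (hR (x0 + a / T))
  have hint : Integrable (fun w => g (x0 + a / T - w / T) * kk w) := by
    refine kk_int.bdd_mul (c := D) ?_ ?_
    · exact (hg.comp (by fun_prop)).aestronglyMeasurable
    · exact ae_of_all _ (fun w => hD _)
  have h2 := integral_add_compl (μ := volume) (measurableSet_Icc (a := -a) (b := a)) hint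
  have h3 := integral_add_compl (μ := volume) (measurableSet_Icc (a := -a) (b := a)) kk_int
  have h4 : ∫ w in Set.Icc (-a) a, (g x0 - 2 * a * B / T) * kk w ≤
      ∫ w in Set.Icc (-a) a, g (x0 + a / T - w / T) * kk w := by
    apply setIntegral_mono_on (kk_int.const_mul _).integrableOn hint.integrableOn measurableSet_Icc
    intro w hw
    apply mul_le_mul_of_nonneg_right _ (kk_nonneg w)
    have h5 := hL x0 ((a - w) / T) (div_nonneg (by linarith [hw.2]) hT.le)
    have h6 : x0 + (a - w) / T = x0 + a / T - w / T := by ring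
    rw [h6] at h5
    have h7 : B * ((a - w) / T) ≤ 2 * a * B / T := by
      rw [← mul_div_assoc]
      apply div_le_div_of_nonneg_right _ hT.le
      nlinarith [hw.1]
    linarith
  have h5 : ∫ w in (Set.Icc (-a) a)ᶜ, (-D) * kk w ≤
      ∫ w in (Set.Icc (-a) a)ᶜ, g (x0 + a / T - w / T) * kk w := by
    apply setIntegral_mono_on (kk_int.const_mul _).integrableOn hint.integrableOn
      measurableSet_Icc.compl
    intro w hw
    apply mul_le_mul_of_nonneg_right _ (kk_nonneg w)
    linarith [(abs_le.mp (hD (x0 + a / T - w / T))).1]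
  rw [integral_const_mul] at h4 h5
  have h6 : (∫ w, kk w) - ∫ w in Set.Icc (-a) a, kk w = ∫ w in (Set.Icc (-a) a)ᶜ, kk w := by
    linarith
  rw [h6]
  linarith

lemma kk_neg (w : ℝ) : kk (-w) = kk w := by
  unfold kk; simp

lemma desmooth_abs (g : ℝ → ℝ) (hg : Measurable g) (D B T a x0 R : ℝ) (hT : 0 < T) (ha : 0 < a)
    (hB : 0 ≤ B)
    (hD : ∀ x, |g x| ≤ D) (hL : ∀ y s, 0 ≤ s → g y - B * s ≤ g (y + s))
    (hR : ∀ x, |∫ w, g (x - w / T) * kk w| ≤ R) :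
    |g x0| * (∫ w in Set.Icc (-a) a, kk w) ≤ R + 2 * a * B / T * (∫ w in Set.Icc (-a) a, kk w)
      + D * ((∫ w, kk w) - ∫ w in Set.Icc (-a) a, kk w) := by
  rcases abs_choice (g x0) with h | h
  · rw [h]; exact desmooth g hg D B T a x0 R hT ha hB hD hL hR
  · rw [h]
    have := desmooth (fun y => - g (-y)) (hg.comp measurable_neg).neg D B T a (-x0) R hT ha hB
      (fun x => by simpa using hD (-x)) (fun y s hs => by
        have := hL (-(y + s)) s hs
        rw [show -(y + s) + s = -y by ring] at this
        linarith) (fun x => by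
        have h1 := hR (-x)
        rw [← integral_neg_eq_self] at h1
        simp only [kk_neg] at h1
        rw [← abs_neg, ← integral_neg]
        convert h1 using 4
        rw [neg_mul, neg_neg]
        congr 2
        ring)
    simpa using this

lemma smooth_eq (μ : Measure ℝ) [IsProbabilityMeasure μ] (x T : ℝ) (hT : 0 < T) :
    ∫ w, (μ (Set.Iic (x - w / T))).toReal * kk w =
      ∫ u, (∫ w in Set.Iic (T * (x - u)), kk w) ∂μ := by
  have hS : MeasurableSet {p : ℝ × ℝ | p.2 ≤ x - p.1 / T} :=
    measurableSet_le (by fun_prop) (by fun_prop)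
  have hint : Integrable (Function.uncurry fun w u : ℝ =>
      Set.indicator {p : ℝ × ℝ | p.2 ≤ x - p.1 / T} (fun p => kk p.1) (w, u))
      (volume.prod μ) := (kk_int.comp_fst μ).indicator hS
  have h := integral_integral_swap hint
  convert h using 2
  · ext w
    have : (fun u : ℝ => Set.indicator {p : ℝ × ℝ | p.2 ≤ x - p.1 / T} (fun p => kk p.1) (w, u))
        = Set.indicator (Set.Iic (x - w / T)) (fun _ => kk w) := by
      ext u; simp [Set.indicator]
    rw [this, integral_indicator measurableSet_Iic]
    simp [Measure.real]
  · ext u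
    rw [← integral_indicator measurableSet_Iic]
    congr 1
    ext w
    have : u ≤ x - w / T ↔ w ≤ T * (x - u) := by
      rw [le_sub_comm, div_le_iff₀ hT, mul_comm]
    simp [Set.indicator, this]

lemma win_bound (A : ℝ) (hA : 0 ≤ A) (y : ℝ) :
    ‖∫ s in (0:ℝ)..A, kk (y - s)‖ ≤ ∫ w, kk w := by
  rw [intervalIntegral.integral_comp_sub_left, intervalIntegral.integral_of_le (by linarith),
    Real.norm_of_nonneg (setIntegral_nonneg measurableSet_Ioc (fun w _ => kk_nonneg w))]
  exact setIntegral_le_integral kk_int (ae_of_all _ kk_nonneg)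

lemma win_tendsto (μ : Measure ℝ) [IsProbabilityMeasure μ] (x T : ℝ) :
    Tendsto (fun n : ℕ => ∫ u, (∫ s in (0:ℝ)..(n:ℝ), kk (T * (x - u) - s)) ∂μ) atTop
      (𝓝 (∫ u, (∫ w in Set.Iic (T * (x - u)), kk w) ∂μ)) := by
  apply tendsto_integral_of_dominated_convergence (fun _ => ∫ w, kk w)
  · intro n
    apply Continuous.aestronglyMeasurable
    apply intervalIntegral.continuous_parametric_intervalIntegral_of_continuous'
    have := kk_cont
    unfold Function.uncurry
    fun_prop
  · simp
  · intro n
    exact ae_of_all _ fun u => win_bound n (by positivity) _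
  · refine ae_of_all _ fun u => ?_
    have h := intervalIntegral_tendsto_integral_Iic (f := kk) (μ := volume) (T * (x - u))
      kk_int.integrableOn (l := atTop) (a := fun n : ℕ => T * (x - u) - n)
      (tendsto_atBot_add_const_left _ _ (tendsto_neg_atTop_atBot.comp tendsto_natCast_atTop_atTop))
    refine h.congr fun n => ?_
    rw [intervalIntegral.integral_comp_sub_left]
    simp

lemma win_swap (A y : ℝ) :
    ∫ s in (0:ℝ)..A, kk (y - s) =
      ∫ t in (0:ℝ)..1, (1 - t) * ∫ s in (0:ℝ)..A, Real.cos (t * (y - s)) := by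
  unfold kk
  rw [intervalIntegral_intervalIntegral_swap]
  · simp
  · have : IsFiniteMeasure (volume.restrict (Set.uIoc (0:ℝ) 1)) := by
      unfold Set.uIoc; infer_instance
    have : IsFiniteMeasure (volume.restrict (Set.uIoc (0:ℝ) A)) := by
      unfold Set.uIoc; infer_instance
    have h1 : Integrable (fun t : ℝ => 1 - t) (volume.restrict (Set.uIoc (0:ℝ) 1)) :=
      (Continuous.intervalIntegrable (by fun_prop) 0 1).def'
    rw [IntegrableOn, Measure.volume_eq_prod, ← Measure.prod_restrict]
    refine (h1.comp_snd (volume.restrict (Set.uIoc (0:ℝ) A))).mul_bdd (c := 1) ?_ ?_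
    · apply Continuous.aestronglyMeasurable
      fun_prop
    · exact ae_of_all _ fun p => Real.abs_cos_le_one _

lemma q_bound (A t y : ℝ) (hA : 0 ≤ A) : ‖∫ s in (0:ℝ)..A, Real.cos (t * (y - s))‖ ≤ A := by
  have := intervalIntegral.norm_integral_le_of_norm_le_const (a := 0) (b := A) (C := 1)
    (f := fun s : ℝ => Real.cos (t * (y - s))) (fun s _ => Real.abs_cos_le_one _)
  simpa [abs_of_nonneg hA] using this

lemma q_eq (A t y : ℝ) (ht : t ≠ 0) : ∫ s in (0:ℝ)..A, Real.cos (t * (y - s)) =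
    (Real.sin (t * y) - Real.sin (t * (y - A))) / t := by
  rw [intervalIntegral.integral_comp_sub_left (fun s => Real.cos (t * s)),
    intervalIntegral.integral_comp_mul_left _ ht]
  simp
  field_simp

lemma win_prod_int (μ : Measure ℝ) [IsProbabilityMeasure μ] (x T A : ℝ) (hA : 0 ≤ A) :
    Integrable (Function.uncurry fun t u : ℝ =>
      (1 - t) * ∫ s in (0:ℝ)..A, Real.cos (t * (T * (x - u) - s)))
      ((volume.restrict (Set.uIoc (0:ℝ) 1)).prod μ) := by
  have : IsFiniteMeasure (volume.restrict (Set.uIoc (0:ℝ) 1)) := by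
    unfold Set.uIoc; infer_instance
  have h1 : Integrable (fun t : ℝ => 1 - t) (volume.restrict (Set.uIoc (0:ℝ) 1)) :=
    (Continuous.intervalIntegrable (by fun_prop) 0 1).def'
  refine (h1.comp_fst μ).mul_bdd (c := A) ?_ ?_
  · apply Continuous.aestronglyMeasurable
    apply intervalIntegral.continuous_parametric_intervalIntegral_of_continuous'
      (f := fun (p : ℝ × ℝ) s => Real.cos (p.1 * (T * (x - p.2) - s)))
    unfold Function.uncurry
    fun_prop
  · exact ae_of_all _ fun p => q_bound A _ _ hA

lemma int_win (μ : Measure ℝ) [IsProbabilityMeasure μ] (x T A : ℝ) (hA : 0 ≤ A) :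
    ∫ u, (∫ s in (0:ℝ)..A, kk (T * (x - u) - s)) ∂μ =
      ∫ t in (0:ℝ)..1, (1 - t) * ∫ u, (∫ s in (0:ℝ)..A, Real.cos (t * (T * (x - u) - s))) ∂μ := by
  simp_rw [win_swap]
  rw [← intervalIntegral_integral_swap (win_prod_int μ x T A hA)]
  simp_rw [integral_const_mul]

lemma int_sin (μ : Measure ℝ) [IsProbabilityMeasure μ] (α τ : ℝ) :
    ∫ u, Real.sin (α - τ * u) ∂μ = -(Complex.exp (-(α * I)) * charFn μ τ).im := by
  unfold charFn
  rw [← integral_const_mul]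
  have hint : Integrable (fun u : ℝ => Complex.exp (-(α * I)) * Complex.exp ((τ * u : ℝ) * I)) μ := by
    apply Integrable.of_bound (C := 1)
    · apply Continuous.aestronglyMeasurable
      fun_prop
    · refine ae_of_all _ fun u => ?_
      rw [norm_mul, ← neg_mul, ← ofReal_neg, norm_exp_ofReal_mul_I, norm_exp_ofReal_mul_I]
      simp
  have h := imCLM.integral_comp_comm hint
  simp only [imCLM_apply] at h
  rw [← h, ← integral_neg]
  congr 1
  ext u
  rw [← Complex.exp_add, show -((α:ℂ) * I) + ((τ * u : ℝ):ℂ) * I = ((τ * u - α : ℝ) : ℂ) * I by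
    push_cast; ring, exp_ofReal_mul_I_im, ← Real.sin_neg]
  congr 1; ring

lemma int_sin_sub (μ ν : Measure ℝ) [IsProbabilityMeasure μ] [IsProbabilityMeasure ν] (α τ : ℝ) :
    |∫ u, Real.sin (α - τ * u) ∂μ - ∫ u, Real.sin (α - τ * u) ∂ν| ≤ ‖charFn μ τ - charFn ν τ‖ := by
  rw [int_sin, int_sin]
  have h : -(Complex.exp (-(α * I)) * charFn μ τ).im - -(Complex.exp (-(α * I)) * charFn ν τ).im =
    -(Complex.exp (-(α * I)) * (charFn μ τ - charFn ν τ)).im := by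
    rw [mul_sub, sub_im]; ring
  rw [h, abs_neg]
  refine (abs_im_le_norm _).trans ?_
  rw [norm_mul, ← neg_mul, ← ofReal_neg, norm_exp_ofReal_mul_I, one_mul]

lemma sin_int (μ : Measure ℝ) [IsProbabilityMeasure μ] (α τ : ℝ) :
    Integrable (fun u => Real.sin (α - τ * u)) μ := by
  apply Integrable.of_bound (C := 1)
  · apply Continuous.aestronglyMeasurable
    fun_prop
  · exact ae_of_all _ fun u => Real.abs_sin_le_one _

lemma Q_sub (μ ν : Measure ℝ) [IsProbabilityMeasure μ] [IsProbabilityMeasure ν] (x T A t : ℝ)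
    (ht : 0 < t) :
    |∫ u, (∫ s in (0:ℝ)..A, Real.cos (t * (T * (x - u) - s))) ∂μ -
      ∫ u, (∫ s in (0:ℝ)..A, Real.cos (t * (T * (x - u) - s))) ∂ν| ≤
      2 * ‖charFn μ (T * t) - charFn ν (T * t)‖ / t := by
  have key : ∀ (ρ : Measure ℝ) [IsProbabilityMeasure ρ],
      ∫ u, (∫ s in (0:ℝ)..A, Real.cos (t * (T * (x - u) - s))) ∂ρ =
      (∫ u, Real.sin (T * t * x - (T * t) * u) ∂ρ
        - ∫ u, Real.sin (T * t * x - t * A - (T * t) * u) ∂ρ) / t := by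
    intro ρ _
    simp_rw [q_eq A t _ ht.ne']
    rw [integral_div, ← integral_sub (sin_int _ _ _) (sin_int _ _ _)]
    congr 2
    ext u
    congr 2 <;> ring
  rw [key μ, key ν, ← sub_div, abs_div, abs_of_pos ht]
  apply div_le_div_of_nonneg_right _ ht.le
  have h1 := abs_le.mp (int_sin_sub μ ν (T * t * x) (T * t))
  have h2 := abs_le.mp (int_sin_sub μ ν (T * t * x - t * A) (T * t))
  rw [abs_le]
  constructor <;> linarith [h1.1, h1.2, h2.1, h2.2]

lemma charFn_neg (μ : Measure ℝ) (t : ℝ) : charFn μ (-t) = (starRingEnd ℂ) (charFn μ t) := by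
  unfold charFn
  rw [← integral_conj]
  congr 1
  ext x
  rw [← exp_conj]
  simp

lemma I_lower (μ ν : Measure ℝ) (T : ℝ) (hT : 0 < T) :
    ∫⁻ t in Set.Ioc (0:ℝ) 1, ENNReal.ofReal (2 * ‖charFn μ (T * t) - charFn ν (T * t)‖ / t) ≤
    ∫⁻ t in Set.Icc (-T) T, (‖(charFn μ t - charFn ν t) / (t : ℂ)‖₊ : ℝ≥0∞) := by
  set g : ℝ → ℝ≥0∞ := fun t => (‖(charFn μ t - charFn ν t) / (t : ℂ)‖₊ : ℝ≥0∞) with hg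
  have g_neg : ∀ t, g (-t) = g t := by
    intro t
    simp only [hg]
    rw [charFn_neg, charFn_neg, ← map_sub]
    congr 1
    apply NNReal.eq
    simp only [coe_nnnorm, norm_div, RCLike.norm_conj, ofReal_neg, norm_neg]
  have h1 : ∫⁻ t in Set.Ioc 0 T, g t = ∫⁻ t in Set.Ioc (0:ℝ) 1, ENNReal.ofReal |T| * g (T * t) := by
    rw [← lintegral_image_eq_lintegral_abs_deriv_mul (f := fun t => T * t) (f' := fun _ => T)
      measurableSet_Ioc (fun t _ => by simpa using ((hasDerivAt_id t).const_mul T).hasDerivWithinAt)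
      (fun a _ b _ h => by simpa [hT.ne'] using h)]
    rw [Set.image_mul_left_Ioc hT]
    simp
  have h2 : ∫⁻ t in Set.Ico (-T) 0, g t = ∫⁻ t in Set.Ioc 0 T, g t := by
    have := lintegral_image_eq_lintegral_abs_deriv_mul (f := fun t => -t) (f' := fun _ => -1)
      (measurableSet_Ioc (a := 0) (b := T)) (fun t _ => (hasDerivAt_neg t).hasDerivWithinAt)
      (fun a _ b _ h => by simpa using h) g
    simpa [g_neg] using this
  have h3 : ∫⁻ t in Set.Ico (-T) 0 ∪ Set.Ioc 0 T, g t ≤ ∫⁻ t in Set.Icc (-T) T, g t := by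
    apply lintegral_mono_set
    rintro t (ht | ht)
    · exact ⟨ht.1, by linarith [ht.2]⟩
    · exact ⟨by linarith [ht.1], ht.2⟩
  rw [lintegral_union measurableSet_Ioc (by
    rw [Set.disjoint_left]; intro x hx hx'; linarith [hx.2, hx'.1]), h2, ← two_mul, h1,
    ← lintegral_const_mul' _ _ (by simp)] at h3
  refine le_trans (le_of_eq ?_) h3
  apply setLIntegral_congr_fun measurableSet_Ioc
  intro t ht
  have ht0 := ht.1
  simp only [hg]
  rw [abs_of_pos hT, ← enorm_eq_nnnorm, ← ofReal_norm, ← ENNReal.ofReal_mul hT.le,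
    show (2:ℝ≥0∞) = ENNReal.ofReal 2 by simp, ← ENNReal.ofReal_mul (by norm_num)]
  congr 1
  rw [norm_div, norm_real, Real.norm_of_nonneg (by positivity)]
  field_simp

lemma Q_meas (μ : Measure ℝ) [IsProbabilityMeasure μ] (x T A : ℝ) (hA : 0 ≤ A) :
    IntervalIntegrable (fun t => (1 - t) *
      ∫ u, (∫ s in (0:ℝ)..A, Real.cos (t * (T * (x - u) - s))) ∂μ) volume 0 1 := by
  rw [intervalIntegrable_iff]
  have h := (win_prod_int μ x T A hA).integral_prod_left
  simp only [Function.uncurry, integral_const_mul] at h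
  exact h

lemma smooth_XY (μ ν : Measure ℝ) [IsProbabilityMeasure μ] [IsProbabilityMeasure ν]
    (x T : ℝ) (hT : 0 < T) :
    ENNReal.ofReal |(∫ w, (μ (Set.Iic (x - w / T))).toReal * kk w)
      - (∫ w, (ν (Set.Iic (x - w / T))).toReal * kk w)| ≤
    ∫⁻ t in Set.Icc (-T) T, (‖(charFn μ t - charFn ν t) / (t : ℂ)‖₊ : ℝ≥0∞) := by
  rw [smooth_eq μ x T hT, smooth_eq ν x T hT]
  have h := (ENNReal.continuous_ofReal.tendsto _).comp
    ((win_tendsto μ x T).sub (win_tendsto ν x T)).abs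
  refine le_of_tendsto' h fun n => ?_
  refine le_trans ?_ (I_lower μ ν T hT)
  have hn : (0:ℝ) ≤ n := by positivity
  simp only [Function.comp]
  rw [int_win μ x T n hn, int_win ν x T n hn, ← intervalIntegral.integral_sub
    (Q_meas μ x T n hn) (Q_meas ν x T n hn), intervalIntegral.integral_of_le zero_le_one,
    ← Real.norm_eq_abs, ofReal_norm]
  refine (enorm_integral_le_lintegral_enorm _).trans ?_
  apply setLIntegral_mono' measurableSet_Ioc
  intro t ht
  rw [← ofReal_norm]
  apply ENNReal.ofReal_le_ofReal
  rw [← mul_sub, norm_mul, Real.norm_eq_abs, Real.norm_eq_abs]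
  have h1 : |1 - t| ≤ 1 := by rw [abs_le]; constructor <;> linarith [ht.1, ht.2]
  calc _ ≤ 1 * _ := mul_le_mul_of_nonneg_right h1 (abs_nonneg _)
    _ ≤ _ := by rw [one_mul]; exact Q_sub μ ν x T n t ht.1

lemma kol_bdd (μ ν : Measure ℝ) [IsProbabilityMeasure μ] [IsProbabilityMeasure ν] :
    BddAbove (Set.range fun t : ℝ => |(μ (Set.Iic t)).toReal - (ν (Set.Iic t)).toReal|) := by
  refine ⟨1, ?_⟩
  rintro _ ⟨t, rfl⟩
  have h1 : (μ (Set.Iic t)).toReal ≤ 1 := measureReal_le_one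
  have h2 : (ν (Set.Iic t)).toReal ≤ 1 := measureReal_le_one
  have h3 : 0 ≤ (μ (Set.Iic t)).toReal := ENNReal.toReal_nonneg
  have h4 : 0 ≤ (ν (Set.Iic t)).toReal := ENNReal.toReal_nonneg
  simp only
  rw [abs_le]; constructor <;> linarith

lemma le_kol (μ ν : Measure ℝ) [IsProbabilityMeasure μ] [IsProbabilityMeasure ν] (t : ℝ) :
    |(μ (Set.Iic t)).toReal - (ν (Set.Iic t)).toReal| ≤ kolDist μ ν :=
  le_ciSup (kol_bdd μ ν) t

lemma cdf_mono (μ : Measure ℝ) [IsProbabilityMeasure μ] :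
    Monotone (fun t => (μ (Set.Iic t)).toReal) := fun a b hab =>
  ENNReal.toReal_mono (measure_ne_top _ _) (measure_mono (Set.Iic_subset_Iic.mpr hab))

lemma cdf_kk_int (μ : Measure ℝ) [IsProbabilityMeasure μ] (x T : ℝ) :
    Integrable (fun w => (μ (Set.Iic (x - w / T))).toReal * kk w) := by
  refine kk_int.bdd_mul (c := 1) ?_ ?_
  · exact ((cdf_mono μ).measurable.comp (by fun_prop : Measurable fun w : ℝ => x - w / T)).aestronglyMeasurable
  · refine ae_of_all _ fun w => ?_
    rw [Real.norm_of_nonneg ENNReal.toReal_nonneg]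
    exact measureReal_le_one

lemma cdf_lip (fZ : ℝ → ℝ) (B : ℝ) (hB : ∀ x, fZ x ≤ B) (hB0 : 0 ≤ B)
    (h : IsProbabilityMeasure (volume.withDensity (fun x => ENNReal.ofReal (fZ x))))
    (y s : ℝ) (hs : 0 ≤ s) :
    ((volume.withDensity (fun x => ENNReal.ofReal (fZ x))) (Set.Iic (y + s))).toReal ≤
    ((volume.withDensity (fun x => ENNReal.ofReal (fZ x))) (Set.Iic y)).toReal + B * s := by
  set μ := volume.withDensity (fun x => ENNReal.ofReal (fZ x)) with hμ
  have h1 : μ (Set.Ioc y (y + s)) ≤ ENNReal.ofReal (B * s) := by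
    rw [hμ, withDensity_apply _ measurableSet_Ioc]
    calc _ ≤ ∫⁻ x in Set.Ioc y (y + s), ENNReal.ofReal B :=
          lintegral_mono fun x => ENNReal.ofReal_le_ofReal (hB x)
      _ = _ := by
        rw [setLIntegral_const, Real.volume_Ioc, ENNReal.ofReal_mul hB0]
        simp
  have h2 : μ (Set.Iic (y + s)) ≤ μ (Set.Iic y) + ENNReal.ofReal (B * s) := by
    rw [← Set.Iic_union_Ioc_eq_Iic (by linarith : y ≤ y + s)]
    exact (measure_union_le _ _).trans (by gcongr)
  have h3 := ENNReal.toReal_mono (by simp) h2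
  rwa [ENNReal.toReal_add (measure_ne_top _ _) (by simp), ENNReal.toReal_ofReal (by positivity)] at h3

/-- **Lemma 2.6, second inequality**: there is an absolute constant `c > 0` so that for any
real random variables `X, Y` (given by their laws) and any `Z` with a bounded Lebesgue
density `f_Z`, for every `T > 0`,
`d_K(X,Z) ≤ (4c+1) d_K(Y,Z) + ∫_{−T}^{T} |(φ_X(t) − φ_Y(t))/t| dt + 2‖f_Z‖_∞ c²/T`
(the middle integral being a Lebesgue integral with values in `[0,∞]`). -/
theorem esseen_type_inequality' :
    ∃ c : ℝ, 0 < c ∧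
      ∀ (μX μY μZ : Measure ℝ), IsProbabilityMeasure μX → IsProbabilityMeasure μY →
      ∀ (fZ : ℝ → ℝ) (B : ℝ), Measurable fZ → (∀ x, 0 ≤ fZ x) → (∀ x, fZ x ≤ B) →
      μZ = MeasureTheory.volume.withDensity (fun x => ENNReal.ofReal (fZ x)) →
      IsProbabilityMeasure μZ →
      ∀ T : ℝ, 0 < T →
        ENNReal.ofReal (kolDist μX μZ) ≤
          ENNReal.ofReal ((4 * c + 1) * kolDist μY μZ) +
            (∫⁻ t in Set.Icc (-T) T, (‖(charFn μX t - charFn μY t) / (t : ℂ)‖₊ : ℝ≥0∞)) +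
            ENNReal.ofReal (2 * B * c ^ 2 / T) := by
  obtain ⟨a, ha, ham⟩ := exists_a
  have hM := kk_mass
  have hmM : ∫ w in Set.Icc (-a) a, kk w ≤ ∫ w, kk w :=
    setIntegral_le_integral kk_int (ae_of_all _ kk_nonneg)
  generalize hMdef : ∫ w, kk w = M at *
  generalize hmdef : ∫ w in Set.Icc (-a) a, kk w = m at *
  refine ⟨a * M + M, by positivity, ?_⟩
  intro μX μY μZ hX hY fZ B _ hf0 hfB hμZ hZ T hT
  have hB0 : 0 ≤ B := (hf0 0).trans (hfB 0)
  have hXY := fun x => smooth_XY μX μY x T hT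
  generalize hI : (∫⁻ t in Set.Icc (-T) T,
    (‖(charFn μX t - charFn μY t) / (t : ℂ)‖₊ : ℝ≥0∞)) = I at *
  by_cases hItop : I = ⊤
  · simp [hItop]
  have hXY' : ∀ x, |(∫ w, (μX (Set.Iic (x - w / T))).toReal * kk w)
      - (∫ w, (μY (Set.Iic (x - w / T))).toReal * kk w)| ≤ I.toReal := fun x =>
    (ENNReal.ofReal_le_iff_le_toReal hItop).mp (hXY x)
  have hδ0 : 0 ≤ kolDist μY μZ := (abs_nonneg _).trans (le_kol μY μZ 0)
  have hD0 : 0 ≤ kolDist μX μZ := (abs_nonneg _).trans (le_kol μX μZ 0)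
  set D := kolDist μX μZ with hD
  set δ := kolDist μY μZ with hδ
  have hYZ : ∀ x, |(∫ w, (μY (Set.Iic (x - w / T))).toReal * kk w)
      - (∫ w, (μZ (Set.Iic (x - w / T))).toReal * kk w)| ≤ δ * M := by
    intro x
    rw [← integral_sub (cdf_kk_int μY x T) (cdf_kk_int μZ x T), ← hMdef, ← integral_const_mul,
      ← Real.norm_eq_abs]
    apply norm_integral_le_of_norm_le (kk_int.const_mul _)
    refine ae_of_all _ fun w => ?_
    rw [← sub_mul, norm_mul, Real.norm_of_nonneg (kk_nonneg w)]
    exact mul_le_mul_of_nonneg_right (le_kol μY μZ _) (kk_nonneg w)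
  have key : ∀ x0, |(μX (Set.Iic x0)).toReal - (μZ (Set.Iic x0)).toReal| * m ≤
      (I.toReal + δ * M) + 2 * a * B / T * m + D * (M - m) := by
    intro x0
    rw [← hMdef, ← hmdef]
    refine desmooth_abs (fun y => (μX (Set.Iic y)).toReal - (μZ (Set.Iic y)).toReal)
      ((cdf_mono μX).measurable.sub (cdf_mono μZ).measurable) D B T a x0 _ hT ha hB0
      (fun x => le_kol μX μZ x) ?_ ?_
    · intro y s hs
      have h1 : (μX (Set.Iic y)).toReal ≤ (μX (Set.Iic (y + s))).toReal :=
        cdf_mono μX (by linarith)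
      have h2 : (μZ (Set.Iic (y + s))).toReal ≤ (μZ (Set.Iic y)).toReal + B * s := by
        subst hμZ
        exact cdf_lip fZ B hfB hB0 hZ y s hs
      linarith
    · intro x
      simp only [sub_mul]
      rw [integral_sub (cdf_kk_int μX x T) (cdf_kk_int μZ x T), hMdef]
      exact (abs_sub_le _ _ _).trans (add_le_add (hXY' x) (hYZ x))
  have hm : 0 < m := by linarith
  have hDm : D * m ≤ (I.toReal + δ * M) + 2 * a * B / T * m + D * (M - m) := by
    rw [← le_div_iff₀ hm]
    apply ciSup_le
    intro t
    rw [le_div_iff₀ hm]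
    exact key t
  have hab : 0 ≤ 2 * a * B / T := by positivity
  have hfin : D ≤ (4 * (a * M + M) + 1) * δ + I.toReal + 2 * B * (a * M + M) ^ 2 / T := by
    have h1 : D ≤ D * (2 * m - M) := by nlinarith
    have h2 : 2 * a * B / T * m ≤ 2 * a * B / T * M := mul_le_mul_of_nonneg_left hmM hab
    have h3 : 2 * a * B / T * M ≤ 2 * B * (a * M + M) ^ 2 / T := by
      rw [div_mul_eq_mul_div]
      apply div_le_div_of_nonneg_right _ hT.le
      have haM : 0 < a * M := by positivity
      have : a * M ≤ (a * M + M) ^ 2 := by nlinarith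
      nlinarith
    have h4 : δ * M ≤ (4 * (a * M + M) + 1) * δ := by
      have haM : 0 < a * M := by positivity
      nlinarith
    nlinarith
  rw [← ENNReal.ofReal_toReal hItop, ← ENNReal.ofReal_add (by positivity) (by positivity),
    ← ENNReal.ofReal_add (by positivity) (by positivity)]
  exact ENNReal.ofReal_le_ofReal hfin
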